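/- arXiv:1502.03341 — 3 statements merged into one kernel-verified Lean document; each statement's English description precedes it below -/
import Mathlib

section
/- Let q be a prime power, n a positive integer, and let f ∈ F_q[X] be a primitive polynomial of degree n. Then the cyclic group ⟨C_f⟩ generated by the companion matrix of f acts transitively on the set of non-zero vectors of the vector space F_q^n. -/
open Polynomial Matrix
open scoped MatrixGroups

/-- The companion matrix of a polynomial `f` of degree `n`: entries `1` on the
subdiagonal, last column `(-a_0, …, -a_{n-1})ᵀ`, and `0` elsewhere. -/
def companionMatrix {F : Type} [Field F] (n : ℕ) (f : Polynomial F) :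
    Matrix (Fin n) (Fin n) F :=
  Matrix.of fun i j =>
    if (j : ℕ) = n - 1 then -f.coeff (i : ℕ)
    else if (i : ℕ) = (j : ℕ) + 1 then 1 else 0

/-- `f` is a primitive polynomial of degree `n` over the finite field `F`:
`f` is monic irreducible of degree `n` and the image of `X` in `F[X]/(f)` is a
unit generating the whole unit group. -/
def IsPrimitivePoly {F : Type} [Field F] (f : Polynomial F) (n : ℕ) : Prop :=
  f.Monic ∧ f.natDegree = n ∧ Irreducible f ∧
    ∃ u : (AdjoinRoot f)ˣ, (u : AdjoinRoot f) = AdjoinRoot.root f ∧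
      ∀ v : (AdjoinRoot f)ˣ, v ∈ Subgroup.zpowers u

/-!
In the basis `1, α, …, α ^ (n - 1)` of the field `F[X]/(f)`, with `α` the class of `X`, the
companion matrix of `f` is the matrix of multiplication by `α`. As `α` generates the multiplicative
group of this field, the group generated by the companion matrix consists of the multiplications by
all non-zero elements, and `z * y⁻¹` carries `y` to `z`.
-/

/-- The regular representation of the unit group of an `R`-algebra `S` in coordinates: with respect
to the basis `b`, a unit acts on column vectors as left multiplication on `S`. -/
noncomputable def unitsLeftMulGL {R S ι : Type*} [CommRing R] [Ring S] [Algebra R S]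
    [Fintype ι] [DecidableEq ι] (b : Module.Basis ι R S) : Sˣ →* GL ι R :=
  Units.map (Algebra.leftMulMatrix b : S →* Matrix ι ι R)

namespace unitsLeftMulGL

variable {R S K ι : Type*} [CommRing R] [Ring S] [Algebra R S] [DivisionRing K] [Algebra R K]
  [Fintype ι] [DecidableEq ι]

theorem coe_apply (b : Module.Basis ι R S) (u : Sˣ) :
    (unitsLeftMulGL b u : Matrix ι ι R) = Algebra.leftMulMatrix b (u : S) :=
  rfl

theorem mulVec_equivFun (b : Module.Basis ι R S) (u : Sˣ) (y : S) :
    (unitsLeftMulGL b u : Matrix ι ι R) *ᵥ b.equivFun y = b.equivFun (u * y) :=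
  Algebra.leftMulMatrix_mulVec_repr b (u : S) y

theorem exists_mulVec_eq (b : Module.Basis ι R K) {v w : ι → R} (hv : v ≠ 0) (hw : w ≠ 0) :
    ∃ c : Kˣ, (unitsLeftMulGL b c : Matrix ι ι R) *ᵥ v = w := by
  obtain ⟨y, rfl⟩ := b.equivFun.surjective v
  obtain ⟨z, rfl⟩ := b.equivFun.surjective w
  have hy : y ≠ 0 := b.equivFun.map_ne_zero_iff.mp hv
  have hz : z ≠ 0 := b.equivFun.map_ne_zero_iff.mp hw
  refine ⟨Units.mk0 (z * y⁻¹) (mul_ne_zero hz (inv_ne_zero hy)), ?_⟩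
  rw [mulVec_equivFun, Units.val_mk0, inv_mul_cancel_right₀ hy]

end unitsLeftMulGL

theorem leftMulMatrix_gen_eq_companionMatrix {F : Type} {S : Type*} [Field F] [Ring S]
    [Algebra F S] (pb : PowerBasis F S) :
    Algebra.leftMulMatrix pb.basis pb.gen = companionMatrix pb.dim (minpoly F pb.gen) := by
  ext i j
  have last_col : (j : ℕ) + 1 = pb.dim ↔ (j : ℕ) = pb.dim - 1 := by lia
  simp only [PowerBasis.leftMulMatrix, PowerBasis.minpolyGen_eq, companionMatrix, of_apply,
    last_col]

theorem leftMulMatrix_root_eq_companionMatrix {F : Type} [Field F] {f : F[X]} (hf : f.Monic) :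
    Algebra.leftMulMatrix (AdjoinRoot.powerBasisAux' hf) (AdjoinRoot.root f) =
      companionMatrix f.natDegree f := by
  have hminpoly : minpoly F (AdjoinRoot.root f) = f := by
    rw [AdjoinRoot.minpoly_root hf.ne_zero, hf.leadingCoeff, inv_one, C_1, mul_one]
  have hmatrix := leftMulMatrix_gen_eq_companionMatrix (AdjoinRoot.powerBasis' hf)
  rwa [AdjoinRoot.powerBasis'_gen, hminpoly] at hmatrix

/-- The cyclic group generated by the companion matrix of a primitive polynomial
of degree `n` over `F_q` acts transitively on the non-zero vectors of `F_q^n`. -/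
theorem stmt_5 (q n : ℕ) (hq : IsPrimePow q) (hn : 0 < n)
    (F : Type) [Field F] [Fintype F] (hF : Fintype.card F = q)
    (f : Polynomial F) (hf : IsPrimitivePoly f n)
    (Cf : GL (Fin n) F)
    (hCf : (Cf : Matrix (Fin n) (Fin n) F) = companionMatrix n f) :
    ∀ v w : Fin n → F, v ≠ 0 → w ≠ 0 →
      ∃ x ∈ Subgroup.zpowers Cf,
        ((x : GL (Fin n) F) : Matrix (Fin n) (Fin n) F).mulVec v = w := by
  obtain ⟨hmonic, rfl, hirr, α, hα, hgen⟩ := hf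
  have : Fact (Irreducible f) := ⟨hirr⟩
  let b := AdjoinRoot.powerBasisAux' hmonic
  let ρ := unitsLeftMulGL b
  have Cf_eq : Cf = ρ α := by
    ext1
    rw [hCf, unitsLeftMulGL.coe_apply, hα, leftMulMatrix_root_eq_companionMatrix]
  intro v w hv hw
  obtain ⟨c, hc⟩ := unitsLeftMulGL.exists_mulVec_eq b hv hw
  have hmem : ρ c ∈ Subgroup.zpowers Cf := by
    rw [Cf_eq, ← MonoidHom.map_zpowers]
    exact Subgroup.mem_map_of_mem ρ (hgen c)
  exact ⟨ρ c, hmem, hc⟩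
end

section
/- Let q be a prime power, n ≥ 1, and let d be a divisor of n. Suppose S ≤ GL_n(F_q) is a cyclic subgroup of order q^n − 1 (a Singer subgroup), and suppose H₁ and H₂ are subgroups of GL_n(F_q), each containing S, and each isomorphic as an abstract group to GL_{n/d}(F_{q^d}). Then H₁ = H₂. -/
open Matrix
open scoped MatrixGroups

/-!
Let `g` generate a Singer subgroup of `GL(V)`. By Cayley–Hamilton `F[g]` has at most `|V|` elements,
and it contains `0` and the `|V| - 1` powers of `g`; so it is a field with `|V|` elements, acting
simply transitively on the nonzero vectors, and hence `g` is centralized only by its own powers.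

Now let `H ∋ g` be isomorphic to `GL_m(K)`, where `|V| = |K| ^ m`. As `K` embeds into `F[g]`, both
`Kˣ` and the centre of `H` are subgroups of order `|K| - 1` of the cyclic group `⟨g⟩`, so they
coincide. Thus `H` lies in the centralizer of `Kˣ`, which consists of the `K`-linear automorphisms
of `V` in `GL(V)` and so has at most `|GL_m(K)| = |H|` elements. Therefore `H` is this centralizer,
which does not depend on `H`.
-/

open Module Polynomial

section

variable {G : Type*} [Group G]

lemma subgroup_eq_of_natCard_eq_of_isCyclic [Finite G] [IsCyclic G]
    {A B : Subgroup G} (h : Nat.card A = Nat.card B) : A = B := by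
  let := IsCyclic.commGroup (α := G)
  have eq_ker (C : Subgroup G) : C = (powMonoidHom (Nat.card C) : G →* G).ker := by
    refine Subgroup.eq_of_le_of_card_ge (fun c hc ↦ ?_) ?_
    · exact congr_arg Subtype.val (pow_card_eq_one' (x := (⟨c, hc⟩ : C)))
    · rw [IsCyclic.card_powMonoidHom_ker]
      exact Nat.gcd_le_right _ Nat.card_pos
  rw [eq_ker A, eq_ker B, h]

lemma subgroup_eq_of_natCard_eq_of_le_isCyclic {S A B : Subgroup G} [Finite S] [IsCyclic S]
    (hA : A ≤ S) (hB : B ≤ S) (h : Nat.card A = Nat.card B) : A = B := by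
  have : A.subgroupOf S = B.subgroupOf S := by
    apply subgroup_eq_of_natCard_eq_of_isCyclic
    rw [Nat.card_congr (Subgroup.subgroupOfEquivOfLe hA).toEquiv,
      Nat.card_congr (Subgroup.subgroupOfEquivOfLe hB).toEquiv, h]
  rwa [Subgroup.subgroupOf_inj, inf_of_le_left hA, inf_of_le_left hB] at this

lemma le_centralizer_map_subtype_center (H : Subgroup G) :
    H ≤ Subgroup.centralizer ((Subgroup.center H).map H.subtype) := by
  rintro h hh _ ⟨z, hz, rfl⟩
  exact congr_arg Subtype.val (Subgroup.mem_center_iff.1 hz ⟨h, hh⟩).symm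

lemma map_subtype_center_le_centralizer (H : Subgroup G) :
    (Subgroup.center H).map H.subtype ≤ Subgroup.centralizer H :=
  Subgroup.le_centralizer_iff.1 (le_centralizer_map_subtype_center H)

end

lemma nonempty_ringHom_of_natCard_eq_pow {K L : Type*} [Field K] [Finite K] [Field L] [Finite L]
    {m : ℕ} (h : Nat.card L = Nat.card K ^ m) : Nonempty (K →+* L) := by
  have := Fintype.ofFinite K
  have := Fintype.ofFinite L
  obtain ⟨p, _, n, hp, hKp⟩ := FiniteField.card' K
  have : Fact p.Prime := ⟨hp⟩
  have : CharP L p := charP_of_card_eq_prime_pow (f := n * m) <| by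
    rw [← Nat.card_eq_fintype_card, h, Nat.card_eq_fintype_card, hKp, pow_mul]
  let := ZMod.algebra K p
  let := ZMod.algebra L p
  have hdvd : finrank (ZMod p) K ∣ finrank (ZMod p) L := by
    refine ⟨m, Nat.pow_right_injective hp.two_le ?_⟩
    simp only [pow_mul, FiniteField.pow_finrank_eq_natCard, h]
  exact (FiniteField.nonempty_algHom_of_finrank_dvd hdvd).map (·.toRingHom)

lemma natCard_center_GL (n R : Type*) [Fintype n] [DecidableEq n] [Nonempty n] [CommRing R] :
    Nat.card (Subgroup.center (GL n R)) = Nat.card Rˣ := by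
  have hinj : Function.Injective (GeneralLinearGroup.scalar n (R := R)) := fun a b h ↦ by
    have i := Classical.arbitrary n
    simpa [Units.ext_iff] using congr((($h : GL n R) : Matrix n n R) i i)
  rw [GeneralLinearGroup.center_eq_range_scalar]
  exact (Nat.card_congr (MonoidHom.ofInjective hinj).toEquiv).symm

lemma natCard_le_natCard_GL (G K V : Type*) [Group G] [Field K] [Finite K] [AddCommGroup V]
    [Module K V] [Module.Finite K V] [DistribMulAction G V] [SMulCommClass G K V]
    [FaithfulSMul G V] : Nat.card G ≤ Nat.card (GL (Fin (finrank K V)) K) := by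
  let b := finBasis K V
  let toGL : G →* GL (Fin (finrank K V)) K :=
    (MonoidHom.comp (LinearMap.toMatrixAlgEquiv b) (DistribMulAction.toModuleEnd K V)).toHomUnits
  refine Nat.card_le_card_of_injective toGL fun x y hxy ↦ ?_
  have hEnd : DistribMulAction.toModuleEnd K V x = DistribMulAction.toModuleEnd K V y :=
    (LinearMap.toMatrixAlgEquiv b).injective (congr_arg Units.val hxy)
  exact FaithfulSMul.eq_of_smul_eq_smul fun v ↦ congr($hEnd v)

lemma natCard_adjoin_singleton_le {F V : Type*} [Field F] [Finite F] [AddCommGroup V] [Module F V]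
    [Module.Finite F V] (T : End F V) : Nat.card (Algebra.adjoin F {T}) ≤ Nat.card V := by
  let aevalT : degreeLT F (finrank F V) → Algebra.adjoin F {T} :=
    fun p ↦ ⟨aeval T p.1, aeval_mem_adjoin_singleton F T⟩
  have hsurj : Function.Surjective aevalT := by
    rintro ⟨_, hx⟩
    obtain ⟨p, rfl⟩ := Algebra.adjoin_mem_exists_aeval F T hx
    refine ⟨⟨p %ₘ T.charpoly, ?_⟩, Subtype.ext (T.aeval_eq_aeval_mod_charpoly p).symm⟩
    rw [mem_degreeLT, ← T.charpoly_natDegree, ← degree_eq_natDegree T.charpoly_monic.ne_zero]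
    exact degree_modByMonic_lt p T.charpoly_monic
  have e := (degreeLTEquiv F (finrank F V)).toEquiv
  have := Finite.of_equiv _ e.symm
  calc Nat.card (Algebra.adjoin F {T})
    _ ≤ Nat.card (degreeLT F (finrank F V)) := Nat.card_le_card_of_surjective _ hsurj
    _ = Nat.card V := by
      rw [Nat.card_congr e, Nat.card_fun, Nat.card_fin, ← natCard_eq_pow_finrank]

variable {F V : Type*} [Field F] [AddCommGroup V] [Module F V]

lemma natCard_centralizer_units_map_le {K : Type*} [Field K] [Finite K] [Finite V] {m : ℕ}
    (φ : K →+* End F V) (hm : Nat.card V = Nat.card K ^ m) :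
    Nat.card (Subgroup.centralizer ((Units.map (φ : K →* End F V)).range : Set (End F V)ˣ)) ≤
      Nat.card (GL (Fin m) K) := by
  let C := Subgroup.centralizer ((Units.map (φ : K →* End F V)).range : Set (End F V)ˣ)
  let := Module.compHom V φ
  have : SMulCommClass C K V := by
    refine ⟨fun c a v ↦ ?_⟩
    obtain rfl | ha := eq_or_ne a 0
    · simp
    · exact congr(($(Subgroup.mem_centralizer_iff.1 c.2 _ ⟨Units.mk0 a ha, rfl⟩) : End F V) v).symm
  have hfinrank : finrank K V = m := by
    rw [natCard_eq_pow_finrank (K := K)] at hm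
    exact Nat.pow_right_injective Finite.one_lt_card hm
  exact hfinrank ▸ natCard_le_natCard_GL C K V

/-- A Singer cycle of a finite vector space `V`: a generator of a Singer subgroup of `GL(V)`, which
is encoded as the unit group of `End F V`. -/
def IsSingerCycle (g : (End F V)ˣ) : Prop :=
  orderOf g = Nat.card V - 1

namespace IsSingerCycle

variable [Finite V] {g : (End F V)ˣ}

local instance : Finite (End F V) := DFunLike.finite _

lemma nontrivial (hg : IsSingerCycle g) : Nontrivial V := by
  have : 0 < Nat.card V - 1 := hg ▸ orderOf_pos g
  exact Finite.one_lt_card_iff_nontrivial.1 (by lia)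

lemma ncard_insert_zero_image_zpowers (hg : IsSingerCycle g) :
    (insert 0 (Units.val '' (Subgroup.zpowers g : Set (End F V)ˣ))).ncard = Nat.card V := by
  have := hg.nontrivial
  have zero_notMem : (0 : End F V) ∉ Units.val '' (Subgroup.zpowers g : Set (End F V)ˣ) := by
    rintro ⟨s, -, hs⟩
    exact s.ne_zero hs
  rw [Set.ncard_insert_of_notMem zero_notMem, Set.ncard_image_of_injective _ Units.val_injective,
    ← Nat.card_coe_set_eq, SetLike.coe_sort_coe, Nat.card_zpowers, hg,
    Nat.sub_add_cancel Nat.card_pos]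

variable [Finite F]

lemma coe_adjoin_eq (hg : IsSingerCycle g) :
    (Algebra.adjoin F {(g : End F V)} : Set (End F V)) =
      insert 0 (Units.val '' (Subgroup.zpowers g : Set (End F V)ˣ)) := by
  refine (Set.eq_of_subset_of_ncard_le ?_ ?_).symm
  · rintro _ (rfl | ⟨s, hs, rfl⟩)
    · exact zero_mem _
    · obtain ⟨k, rfl⟩ := mem_powers_iff_mem_zpowers.2 hs
      exact pow_mem (Algebra.self_mem_adjoin_singleton F _) k
  · rw [hg.ncard_insert_zero_image_zpowers, ← Nat.card_coe_set_eq]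
    exact natCard_adjoin_singleton_le _

lemma exists_mem_zpowers (hg : IsSingerCycle g) {x : End F V}
    (hx : x ∈ Algebra.adjoin F {(g : End F V)}) (h0 : x ≠ 0) :
    ∃ s ∈ Subgroup.zpowers g, (s : End F V) = x := by
  rw [← SetLike.mem_coe, hg.coe_adjoin_eq] at hx
  exact hx.resolve_left h0

lemma val_mem_adjoin (hg : IsSingerCycle g) {s : (End F V)ˣ}
    (hs : s ∈ Subgroup.zpowers g) : (s : End F V) ∈ Algebra.adjoin F {(g : End F V)} := by
  rw [← SetLike.mem_coe, hg.coe_adjoin_eq]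
  exact .inr ⟨s, hs, rfl⟩

lemma natCard_adjoin (hg : IsSingerCycle g) :
    Nat.card (Algebra.adjoin F {(g : End F V)}) = Nat.card V := by
  rw [← hg.ncard_insert_zero_image_zpowers, ← hg.coe_adjoin_eq, ← Nat.card_coe_set_eq,
    SetLike.coe_sort_coe]

lemma isField_adjoin (hg : IsSingerCycle g) : IsField (Algebra.adjoin F {(g : End F V)}) := by
  have := hg.nontrivial
  let := DivisionRing.ofIsUnitOrEqZero (R := Algebra.adjoin F {(g : End F V)}) <| by
    rintro ⟨x, hx⟩
    refine or_iff_not_imp_right.2 fun h0 ↦ ?_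
    obtain ⟨s, hs, rfl⟩ := hg.exists_mem_zpowers hx fun h ↦ h0 (Subtype.ext h)
    have hinv := hg.val_mem_adjoin (inv_mem hs)
    exact .of_mul_eq_one ⟨_, hinv⟩ (Subtype.ext s.mul_inv)
  exact Field.toIsField _

lemma exists_mem_adjoin_apply_eq (hg : IsSingerCycle g) {v : V} (hv : v ≠ 0) (w : V) :
    ∃ x ∈ Algebra.adjoin F {(g : End F V)}, x v = w := by
  let orbit (x : Algebra.adjoin F {(g : End F V)}) : V := (x : End F V) v
  have hinj : Function.Injective orbit := by
    intro x y hxy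
    by_contra hne
    obtain ⟨s, -, hs⟩ := hg.exists_mem_zpowers (x - y).2 (by simpa [sub_eq_zero] using hne)
    have : s • v = 0 := by
      change (s : End F V) v = 0
      rw [hs]
      exact sub_eq_zero.2 hxy
    exact hv ((smul_eq_zero_iff_eq s).1 this)
  obtain ⟨x, hx⟩ := (hinj.bijective_of_nat_card_le hg.natCard_adjoin.ge).2 w
  exact ⟨x, x.2, hx⟩

lemma mem_zpowers_of_commute (hg : IsSingerCycle g) {z : (End F V)ˣ}
    (hz : Commute z g) : z ∈ Subgroup.zpowers g := by
  have := hg.nontrivial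
  obtain ⟨v, hv⟩ := exists_ne (0 : V)
  obtain ⟨x, hx, hxv⟩ := hg.exists_mem_adjoin_apply_eq hv ((z : End F V) v)
  have commute_of_mem {y : End F V} (hy : y ∈ Algebra.adjoin F {(g : End F V)}) :
      Commute (z : End F V) y :=
    Algebra.commute_of_mem_adjoin_singleton_of_commute hy (hz.map (Units.coeHom _))
  have hxz : x = z := by
    ext w
    obtain ⟨y, hy, rfl⟩ := hg.exists_mem_adjoin_apply_eq hv w
    have hxy : Commute x y := by
      have := hg.isField_adjoin.mul_comm ⟨x, hx⟩ ⟨y, hy⟩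
      exact congr_arg Subtype.val this
    calc x (y v) = y (x v) := LinearMap.congr_fun hxy v
      _ = y ((z : End F V) v) := by rw [hxv]
      _ = (z : End F V) (y v) := LinearMap.congr_fun (commute_of_mem hy).symm v
  subst hxz
  obtain ⟨s, hs, hsz⟩ := hg.exists_mem_zpowers hx z.ne_zero
  exact Units.ext hsz ▸ hs

lemma exists_ringHom_range_le_zpowers (hg : IsSingerCycle g) (K : Type*) [Field K] [Finite K]
    {m : ℕ} (hm : Nat.card V = Nat.card K ^ m) :
    ∃ φ : K →+* End F V, (Units.map (φ : K →* End F V)).range ≤ Subgroup.zpowers g := by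
  let L := Algebra.adjoin F {(g : End F V)}
  have := hg.nontrivial
  let := hg.isField_adjoin.toField
  obtain ⟨ψ⟩ : Nonempty (K →+* L) :=
    nonempty_ringHom_of_natCard_eq_pow (hg.natCard_adjoin.trans hm)
  let φ : K →+* End F V := (L.val : L →+* End F V).comp ψ
  refine ⟨φ, ?_⟩
  rintro _ ⟨a, rfl⟩
  obtain ⟨s, hs, hsa⟩ := hg.exists_mem_zpowers (ψ a).2 (Units.map (φ : K →* End F V) a).ne_zero
  have : s = Units.map (φ : K →* End F V) a := Units.ext hsa
  exact this ▸ hs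

theorem eq_centralizer_range (hg : IsSingerCycle g) {K : Type*} [Field K] [Finite K] {m : ℕ}
    (hm : Nat.card V = Nat.card K ^ m) {φ : K →+* End F V}
    (hφ : (Units.map (φ : K →* End F V)).range ≤ Subgroup.zpowers g)
    {H : Subgroup (End F V)ˣ} (hgH : g ∈ H) (e : H ≃* GL (Fin m) K) :
    H = Subgroup.centralizer ((Units.map (φ : K →* End F V)).range : Set (End F V)ˣ) := by
  have := hg.nontrivial
  have hm0 : m ≠ 0 := by
    rintro rfl
    exact (Finite.one_lt_card (α := V)).ne' (by simpa using hm)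
  have : NeZero m := ⟨hm0⟩
  have center_le : (Subgroup.center H).map H.subtype ≤ Subgroup.zpowers g := fun z hz ↦
    hg.mem_zpowers_of_commute (map_subtype_center_le_centralizer H hz g hgH).symm
  have center_eq : (Subgroup.center H).map H.subtype = (Units.map (φ : K →* End F V)).range := by
    refine subgroup_eq_of_natCard_eq_of_le_isCyclic center_le hφ ?_
    rw [Subgroup.card_map_of_injective H.subtype_injective,
      Nat.card_congr (Subgroup.centerCongr e).toEquiv, natCard_center_GL]
    exact Nat.card_congr (MonoidHom.ofInjective (Units.map_injective φ.injective)).toEquiv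
  refine Subgroup.eq_of_le_of_card_ge (center_eq ▸ le_centralizer_map_subtype_center H) ?_
  rw [Nat.card_congr e.toEquiv]
  exact natCard_centralizer_units_map_le φ hm

theorem eq_of_mulEquiv_GL (hg : IsSingerCycle g) {K : Type*} [Field K] [Finite K] {m : ℕ}
    (hm : Nat.card V = Nat.card K ^ m) {H₁ H₂ : Subgroup (End F V)ˣ} (hg₁ : g ∈ H₁) (hg₂ : g ∈ H₂)
    (e₁ : H₁ ≃* GL (Fin m) K) (e₂ : H₂ ≃* GL (Fin m) K) : H₁ = H₂ := by
  obtain ⟨φ, hφ⟩ := hg.exists_ringHom_range_le_zpowers K hm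
  exact (hg.eq_centralizer_range hm hφ hg₁ e₁).trans (hg.eq_centralizer_range hm hφ hg₂ e₂).symm

end IsSingerCycle

/-- If `S` is a Singer subgroup of `GL_n(F_q)` (cyclic of order `q^n - 1`),
`d ∣ n`, and `H₁, H₂` are subgroups of `GL_n(F_q)` containing `S`, each
isomorphic as an abstract group to `GL_{n/d}(F_{q^d})`, then `H₁ = H₂`. -/
theorem stmt_10 (q n d : ℕ) (hq : IsPrimePow q) (hn : 1 ≤ n) (hd : d ∣ n)
    (F : Type) [Field F] [Fintype F] (hF : Fintype.card F = q)
    (K : Type) [Field K] [Fintype K] (hK : Fintype.card K = q ^ d)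
    (S H₁ H₂ : Subgroup (GL (Fin n) F))
    (hScyc : IsCyclic S) (hScard : Nat.card S = q ^ n - 1)
    (hSH₁ : S ≤ H₁) (hSH₂ : S ≤ H₂)
    (h₁ : Nonempty (H₁ ≃* GL (Fin (n / d)) K))
    (h₂ : Nonempty (H₂ ≃* GL (Fin (n / d)) K)) :
    H₁ = H₂ := by
  obtain ⟨e₁⟩ := h₁
  obtain ⟨e₂⟩ := h₂
  obtain ⟨g, rfl⟩ := S.isCyclic_iff_exists_zpowers_eq_top.1 hScyc
  have hV : Nat.card (Fin n → F) = q ^ n := by simp [hF]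
  have hm : Nat.card (Fin n → F) = Nat.card K ^ (n / d) := by
    rw [hV, Nat.card_eq_fintype_card, hK, ← pow_mul, Nat.mul_div_cancel' hd]
  let toLin : GL (Fin n) F ≃* (End F (Fin n → F))ˣ := GeneralLinearGroup.toLin
  have hg : IsSingerCycle (toLin g) := by
    rw [IsSingerCycle, toLin.orderOf_eq, ← Nat.card_zpowers, hScard, hV]
  exact Subgroup.map_injective toLin.injective (hg.eq_of_mulEquiv_GL hm
    (Subgroup.mem_map_of_mem _ (Subgroup.zpowers_le.1 hSH₁))
    (Subgroup.mem_map_of_mem _ (Subgroup.zpowers_le.1 hSH₂))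
    ((toLin.subgroupMap H₁).symm.trans e₁) ((toLin.subgroupMap H₂).symm.trans e₂))
end

section
/- Let q be a prime power and let L be a proper subgroup of GL_2(F_q) containing a cyclic subgroup S of order q^2 − 1. Then S is a normal subgroup of L and the index [L : S] is at most 2. -/
open Matrix
open scoped MatrixGroups

/-!
A commutative subgroup `S` of order `q ^ 2 - 1` is the centralizer of some `s` without eigenvalues,
and `S` together with `0` is the field `F[s]`, of order `q ^ 2`. Let `L` contain `S` and put
`n = [L : S]`.

Since `S` permutes the nonzero vectors simply transitively, `n` is the order of the stabilizer in
`L` of a nonzero vector. By the determinant this stabilizer is an extension of a group of order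
`m ≤ q - 1` by a group of `u ∣ q` transvections, so `n = u * m`; conjugating a transvection shows
`m < u` unless `u = 1`. On the other hand `S` meets each of its other conjugates exactly in the
center, which has index `q + 1` in `S`, so counting the `S`-orbits on `L / S` gives
`n ≡ [N_L(S) : S] (mod q + 1)`, and `[N_L(S) : S] ≤ 2` because `N(S)` acts on `F[s]` by field
automorphisms. These constraints leave only `n ≤ 2` and `n = q * (q - 1) = [GL₂ : S]`.
-/

section GroupTheory

variable {G : Type*} [Group G]

theorem card_modEq_card_fixedPoints_of_dvd_ncard_orbit {X : Type*} [MulAction G X] [Finite X]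
    {k : ℕ} (hk : ∀ x ∉ MulAction.fixedPoints G X, k ∣ (MulAction.orbit G x).ncard) :
    Nat.card X ≡ Nat.card (MulAction.fixedPoints G X) [MOD k] := by
  classical
  have := Fintype.ofFinite X
  let moved : Finset X := {x | x ∉ MulAction.fixedPoints G X}
  have fiber_eq_orbit (x : X) (hx : x ∈ moved) :
      (({y ∈ moved | MulAction.orbit G y = MulAction.orbit G x} : Finset X) : Set X) =
        MulAction.orbit G x := by
    ext y
    simp only [moved, Finset.coe_filter, Finset.mem_filter, Finset.mem_univ, true_and,
      Set.mem_ofPred_eq, MulAction.orbit_eq_iff, and_iff_right_iff_imp]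
    intro hyx hy
    rw [MulAction.mem_fixedPoints'.1 hy x (MulAction.mem_orbit_symm.1 hyx)] at hx
    exact (Finset.mem_filter.1 hx).2 hy
  have dvd_moved : k ∣ moved.card := by
    rw [Finset.card_eq_sum_card_image (MulAction.orbit G) moved]
    refine Finset.dvd_sum fun o ho ↦ ?_
    obtain ⟨x, hx, rfl⟩ := Finset.mem_image.1 ho
    rw [← Set.ncard_coe_finset, fiber_eq_orbit x hx]
    exact hk x (Finset.mem_filter.1 hx).2
  have card_add : Nat.card (MulAction.fixedPoints G X) + moved.card = Nat.card X := by
    rw [Nat.card_eq_fintype_card, Nat.card_eq_fintype_card, Fintype.card_subtype]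
    exact Finset.card_filter_add_card_filter_not _
  exact card_add ▸ (Nat.modEq_zero_iff_dvd.2 dvd_moved).add_left _

-- `H` acts on `G ⧸ H` with fixed points `N(H) / H`; every other point has stabilizer `Z ⊓ H`.
theorem index_modEq_relIndex_normalizer {H Z : Subgroup G} [Finite H] [H.FiniteIndex]
    (hZ : ∀ g ∉ Subgroup.normalizer (H : Set G), ∀ h ∈ H, g⁻¹ * h * g ∈ H ↔ h ∈ Z) :
    H.index ≡ H.relIndex (Subgroup.normalizer H) [MOD Z.relIndex H] := by
  have : Finite (H : Set G) := ‹Finite H›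
  have card_fixedPoints : Nat.card (MulAction.fixedPoints H (G ⧸ H)) =
      H.relIndex (Subgroup.normalizer H) :=
    Nat.card_congr (Sylow.fixedPointsMulLeftCosetsEquivQuotient H)
  rw [← card_fixedPoints]
  refine card_modEq_card_fixedPoints_of_dvd_ncard_orbit fun x hx ↦ ?_
  obtain ⟨g, rfl⟩ := QuotientGroup.mk_surjective x
  rw [Sylow.mem_fixedPoints_mul_left_cosets_iff_mem_normalizer] at hx
  have stabilizer_eq : MulAction.stabilizer H (g : G ⧸ H) = Z.subgroupOf H := by
    ext h
    rw [MulAction.mem_stabilizer_iff, Subgroup.mem_subgroupOf, ← hZ g hx h h.2, eq_comm]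
    change (g : G ⧸ H) = ((h * g : G) : G ⧸ H) ↔ _
    rw [QuotientGroup.eq, mul_assoc]
  rw [← MulAction.index_stabilizer, stabilizer_eq, Subgroup.relIndex]

theorem relIndex_eq_card_inf_stabilizer {X : Type*} [MulAction G X] {S L : Subgroup G}
    (hSL : S ≤ L) {x : X} (hfree : ∀ g ∈ S, g • x = x → g = 1)
    (htrans : ∀ g ∈ L, ∃ h ∈ S, h • g • x = x) :
    S.relIndex L = Nat.card (L ⊓ MulAction.stabilizer G x : Subgroup G) := by
  have compl : (S.subgroupOf L).IsComplement' (MulAction.stabilizer L x) := by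
    refine Subgroup.isComplement'_stabilizer x (fun h hx ↦ ?_) fun g ↦ ?_
    · exact Subtype.ext (Subtype.ext (hfree h h.2 hx))
    · obtain ⟨h, hS, hx⟩ := htrans g g.2
      exact ⟨⟨⟨h, hSL hS⟩, hS⟩, hx⟩
  have stabilizer_eq :
      MulAction.stabilizer L x = (L ⊓ MulAction.stabilizer G x).subgroupOf L := by
    ext g
    simp [Subgroup.mem_subgroupOf, Subgroup.smul_def]
  rw [Subgroup.relIndex, compl.symm.index_eq_card, stabilizer_eq]
  exact Nat.card_congr (Subgroup.subgroupOfEquivOfLe inf_le_left).toEquiv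

theorem normal_of_index_le_two {H : Subgroup G} [H.FiniteIndex] (hH : H.index ≤ 2) :
    H.Normal := by
  have := Subgroup.FiniteIndex.index_ne_zero (H := H)
  obtain h1 | h2 : H.index = 1 ∨ H.index = 2 := by lia
  · exact Subgroup.normal_of_index_eq_one h1
  · exact Subgroup.normal_of_index_eq_two h2

variable {A : Type*} [Group A] (f : G →* A) (H : Subgroup G)

theorem card_eq_card_inf_ker_mul_card_map :
    Nat.card H = Nat.card (H ⊓ f.ker : Subgroup G) * Nat.card (H.map f) := by
  rw [← Subgroup.relIndex_ker, ← Subgroup.inf_relIndex_left, ← Subgroup.relIndex_bot_left,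
    ← Subgroup.relIndex_bot_left, Subgroup.relIndex_mul_relIndex _ _ _ bot_le inf_le_left]

variable {f H}

theorem card_map_lt_card_inf_ker [Finite H] (hne : H ⊓ f.ker ≠ ⊥)
    (hcomm : ∀ h ∈ H, ∀ k ∈ H ⊓ f.ker, k ≠ 1 → Commute h k → h ∈ f.ker) :
    Nat.card (H.map f) < Nat.card (H ⊓ f.ker : Subgroup G) := by
  obtain ⟨k, hk, hk1⟩ : ∃ k ∈ H ⊓ f.ker, k ≠ 1 := by
    simpa [Subgroup.eq_bot_iff_forall, and_assoc] using! hne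
  -- Conjugating `k` by preimages of distinct values of `f` gives distinct elements of the kernel.
  choose! r hrH hr using fun a (ha : a ∈ H.map f) ↦ Subgroup.mem_map.1 ha
  have finite_inf : ((H ⊓ f.ker : Subgroup G) : Set G).Finite :=
    (Set.toFinite (H : Set G)).subset inf_le_left
  have maps_to (a : A) (ha : a ∈ H.map f) :
      r a * k * (r a)⁻¹ ∈ ((H ⊓ f.ker : Subgroup G) : Set G) \ {1} :=
    ⟨⟨H.mul_mem (H.mul_mem (hrH a ha) hk.1) (H.inv_mem (hrH a ha)),
      f.normal_ker.conj_mem k hk.2 _⟩, by simpa using hk1⟩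
  have inj_on : Set.InjOn (fun a ↦ r a * k * (r a)⁻¹) (H.map f : Set A) := by
    intro a ha b hb hab
    have hker := hcomm ((r b)⁻¹ * r a) (H.mul_mem (H.inv_mem (hrH b hb)) (hrH a ha)) k hk hk1
      (by
        have := congr((r b)⁻¹ * $hab * r a)
        simpa [mul_assoc, Commute, SemiconjBy] using! this)
    rw [MonoidHom.mem_ker, map_mul, map_inv, hr a ha, hr b hb] at hker
    exact (inv_mul_eq_one.1 hker).symm
  calc Nat.card (H.map f)
    _ ≤ (((H ⊓ f.ker : Subgroup G) : Set G) \ {1}).ncard :=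
      Set.ncard_le_ncard_of_injOn _ maps_to inj_on (finite_inf.subset Set.sdiff_subset)
    _ < Nat.card (H ⊓ f.ker : Subgroup G) :=
      Set.ncard_sdiff_singleton_lt_of_mem (one_mem _) finite_inf

end GroupTheory

section Commuting

variable {F : Type*} [Field F] {s c d t : Matrix (Fin 2) (Fin 2) F}

theorem mem_span_pair_of_commute (hs : s ∉ Set.range (scalar (Fin 2))) (hc : Commute s c) :
    c ∈ Submodule.span F {1, s} := by
  have h00 := congr($hc.eq 0 0)
  have h01 := congr($hc.eq 0 1)
  have h10 := congr($hc.eq 1 0)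
  simp only [mul_apply, Fin.sum_univ_two] at h00 h01 h10
  have mem_span_of_entries_eq_mul (b : F) (hb01 : c 0 1 = b * s 0 1) (hb10 : c 1 0 = b * s 1 0)
      (hb : c 0 0 - c 1 1 = b * (s 0 0 - s 1 1)) : c ∈ Submodule.span F {1, s} := by
    refine Submodule.mem_span_pair.2 ⟨c 0 0 - b * s 0 0, b, ?_⟩
    ext i j
    fin_cases i <;> fin_cases j <;> simp only [Fin.zero_eta, Fin.mk_one, Matrix.add_apply,
      Matrix.smul_apply, one_apply_eq, one_apply_ne, ne_eq, zero_ne_one, one_ne_zero,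
      not_false_eq_true, smul_eq_mul, mul_one, mul_zero, zero_add, sub_add_cancel]
    · exact hb01.symm
    · exact hb10.symm
    · linear_combination hb
  by_cases h : s 0 1 = 0
  · by_cases h' : s 1 0 = 0
    · have hdiag : s 0 0 - s 1 1 ≠ 0 := by
        refine fun h0 ↦ hs ⟨s 0 0, ?_⟩
        ext i j
        fin_cases i <;> fin_cases j <;> simp [h, h', sub_eq_zero.1 h0]
      refine mem_span_of_entries_eq_mul ((c 0 0 - c 1 1) / (s 0 0 - s 1 1)) ?_ ?_ ?_ <;>
        field_simp <;> grind
    · refine mem_span_of_entries_eq_mul (c 1 0 / s 1 0) ?_ ?_ ?_ <;> field_simp <;> grind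
  · refine mem_span_of_entries_eq_mul (c 0 1 / s 0 1) ?_ ?_ ?_ <;> field_simp <;> grind

theorem commute_of_commute_of_commute (hs : s ∉ Set.range (scalar (Fin 2)))
    (hc : Commute s c) (hd : Commute s d) : Commute c d := by
  obtain ⟨a, b, rfl⟩ := Submodule.mem_span_pair.1 (mem_span_pair_of_commute hs hc)
  exact ((Commute.one_left d).smul_left a).add_left (hd.smul_left b)

theorem isUnit_algebraMap_sub_of_spectrum_eq_empty {R A : Type*} [CommSemiring R] [Ring A]
    [Algebra R A] {x : A} (hx : spectrum R x = ∅) (r : R) : IsUnit (algebraMap R A r - x) := by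
  rw [← spectrum.notMem_iff, hx]
  exact Set.notMem_empty r

theorem notMem_range_scalar_of_spectrum_eq_empty {n : Type*} [Fintype n] [DecidableEq n]
    [Nonempty n] {s : Matrix n n F} (hs : spectrum F s = ∅) :
    s ∉ Set.range (scalar n) := by
  rintro ⟨a, rfl⟩
  have : a ∈ spectrum F (algebraMap F (Matrix n n F) a) := by simp
  exact (hs ▸ this : a ∈ (∅ : Set F))

theorem isUnit_of_commute_of_ne_zero (hs : spectrum F s = ∅) (hc : Commute s c) (hc0 : c ≠ 0) :
    IsUnit c := by
  obtain ⟨a, b, rfl⟩ := Submodule.mem_span_pair.1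
    (mem_span_pair_of_commute (notMem_range_scalar_of_spectrum_eq_empty hs) hc)
  by_cases hb : b = 0
  · subst hb
    have ha : a ≠ 0 := by
      rintro rfl
      simp at hc0
    rw [zero_smul, add_zero, ← Units.smul_mk0 ha]
    exact isUnit_one.smul _
  · have hunit := isUnit_algebraMap_sub_of_spectrum_eq_empty hs (-a / b)
    convert hunit.smul (Units.mk0 (-b) (neg_ne_zero.2 hb)) using 1
    rw [Units.smul_mk0, smul_sub, Algebra.algebraMap_eq_smul_one, smul_smul, neg_smul,
      sub_neg_eq_add, neg_mul_comm, neg_div, neg_neg, mul_div_cancel₀ _ hb]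

theorem mul_self_eq_trace_smul_sub_det_smul_one {R : Type*} [CommRing R]
    (r : Matrix (Fin 2) (Fin 2) R) : r * r = r.trace • r - r.det • 1 := by
  nontriviality R
  have := aeval_self_charpoly r
  simp only [charpoly_fin_two, map_add, map_sub, map_mul, map_pow, Polynomial.aeval_X,
    Polynomial.aeval_C, Algebra.algebraMap_eq_smul_one, smul_mul_assoc, one_mul] at this
  rwa [pow_two, sub_add, sub_eq_zero] at this

-- `s` and `t` have the same characteristic polynomial, and `F[s]` has no zero divisors.
theorem eq_or_eq_trace_smul_one_sub (hs : spectrum F s = ∅) (ht : Commute s t)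
    (htr : t.trace = s.trace) (hdet : t.det = s.det) : t = s ∨ t = s.trace • 1 - s := by
  have hmul : (t - s) * (t - (s.trace • 1 - s)) = 0 := by
    have hs2 := mul_self_eq_trace_smul_sub_det_smul_one s
    have ht2 := mul_self_eq_trace_smul_sub_det_smul_one t
    rw [htr, hdet] at ht2
    calc (t - s) * (t - (s.trace • 1 - s))
      _ = t * t - s * s - s.trace • (t - s) + (t * s - s * t) := by
        simp only [mul_sub, sub_mul, mul_smul_comm, mul_one, smul_sub]
        abel
      _ = 0 := by
        rw [hs2, ht2, ht.eq, smul_sub]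
        abel
  by_cases hts : t - s = 0
  · exact .inl (sub_eq_zero.1 hts)
  · have hunit := isUnit_of_commute_of_ne_zero hs (ht.sub_right (.refl s)) hts
    exact .inr (sub_eq_zero.1 (hunit.mul_right_eq_zero.1 hmul))

theorem mulVec_ne_smul_of_spectrum_eq_empty {n : Type*} [Fintype n] [DecidableEq n]
    {s : Matrix n n F} (hs : spectrum F s = ∅) {v : n → F} (hv : v ≠ 0) (a : F) :
    s *ᵥ v ≠ a • v := by
  intro h
  refine hv (mulVec_injective_of_isUnit (isUnit_algebraMap_sub_of_spectrum_eq_empty hs a) ?_)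
  simp [sub_mulVec, h, Algebra.algebraMap_eq_smul_one, smul_mulVec]

end Commuting

section Torus

variable {F : Type*} [Field F] {s : GL (Fin 2) F}

theorem mem_centralizer_singleton_iff_commute_coe {g : GL (Fin 2) F} :
    g ∈ Subgroup.centralizer {s} ↔
      Commute (s : Matrix (Fin 2) (Fin 2) F) (g : Matrix (Fin 2) (Fin 2) F) := by
  rw [Subgroup.mem_centralizer_singleton_iff, Units.ext_iff]
  exact eq_comm

theorem eq_one_of_mem_centralizer_of_smul_eq (hs : spectrum F s.val = ∅)
    {g : GL (Fin 2) F} (hg : g ∈ Subgroup.centralizer {s}) {v : Fin 2 → F} (hv : v ≠ 0)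
    (hgv : g • v = v) : g = 1 := by
  by_contra hg1
  have hunit : IsUnit ((g : Matrix (Fin 2) (Fin 2) F) - 1) :=
    isUnit_of_commute_of_ne_zero hs
      ((mem_centralizer_singleton_iff_commute_coe.1 hg).sub_right (.one_right _))
      (sub_ne_zero.2 fun h ↦ hg1 (Units.ext h))
  refine hv (mulVec_injective_of_isUnit hunit ?_)
  rw [sub_mulVec, one_mulVec, mulVec_zero, sub_eq_zero]
  exact hgv

theorem exists_mem_centralizer_smul_eq (hs : spectrum F s.val = ∅)
    {v w : Fin 2 → F} (hv : v ≠ 0) (hw : w ≠ 0) :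
    ∃ g ∈ Subgroup.centralizer {s}, g • v = w := by
  have linearIndependent : LinearIndependent F ![v, s.val *ᵥ v] :=
    (LinearIndependent.pair_iff' hv).2 fun a ↦
      (mulVec_ne_smul_of_spectrum_eq_empty hs hv a).symm
  have span_eq_top : Submodule.span F {v, s.val *ᵥ v} = ⊤ := by
    have := linearIndependent.span_eq_top_of_card_eq_finrank (by simp)
    rwa [range_cons_cons_empty] at this
  obtain ⟨a, b, rfl⟩ := Submodule.mem_span_pair.1 (span_eq_top.ge (Submodule.mem_top (x := w)))
  have hcomm : Commute s.val (a • 1 + b • s.val) :=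
    ((Commute.one_right _).smul_right a).add_right ((Commute.refl _).smul_right b)
  have hmulVec : (a • 1 + b • s.val) *ᵥ v = a • v + b • s.val *ᵥ v := by
    rw [add_mulVec, smul_mulVec, smul_mulVec, one_mulVec]
  have hunit : IsUnit (a • 1 + b • s.val) := by
    refine isUnit_of_commute_of_ne_zero hs hcomm fun h ↦ hw ?_
    rw [← hmulVec, h, zero_mulVec]
  exact ⟨hunit.unit, mem_centralizer_singleton_iff_commute_coe.2 hcomm, hmulVec⟩

theorem centralizer_singleton_eq_of_mem_centralizer {x y : GL (Fin 2) F}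
    (hx : x ∉ Subgroup.center (GL (Fin 2) F)) (hy : y ∉ Subgroup.center (GL (Fin 2) F))
    (hyx : y ∈ Subgroup.centralizer {x}) :
    Subgroup.centralizer {y} = Subgroup.centralizer {x} := by
  rw [GeneralLinearGroup.mem_center_iff_val_mem_range_scalar] at hx hy
  rw [mem_centralizer_singleton_iff_commute_coe] at hyx
  ext g
  simp only [mem_centralizer_singleton_iff_commute_coe]
  exact ⟨commute_of_commute_of_commute hy hyx.symm, commute_of_commute_of_commute hx hyx⟩

theorem mem_normalizer_centralizer_of_conj_mem {y g : GL (Fin 2) F}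
    (hs : s ∉ Subgroup.center (GL (Fin 2) F)) (hy : y ∉ Subgroup.center (GL (Fin 2) F))
    (hys : y ∈ Subgroup.centralizer {s}) (hgy : g⁻¹ * y * g ∈ Subgroup.centralizer {s}) :
    g ∈ Subgroup.normalizer (Subgroup.centralizer {s}) := by
  have hconj : g⁻¹ * y * g ∉ Subgroup.center (GL (Fin 2) F) := fun h ↦ hy <| by
    simpa [mul_assoc] using Subgroup.instNormalCenter.conj_mem _ h g
  refine Subgroup.mem_normalizer_iff''.2 fun h ↦ ?_
  calc h ∈ Subgroup.centralizer {s}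
    _ ↔ h ∈ Subgroup.centralizer {y} := by
      rw [centralizer_singleton_eq_of_mem_centralizer hs hy hys]
    _ ↔ g⁻¹ * h * g ∈ Subgroup.centralizer {g⁻¹ * y * g} := by
      simp only [Subgroup.mem_centralizer_singleton_iff, mul_assoc, mul_inv_cancel_left,
        mul_right_inj]
      simp only [← mul_assoc, mul_left_inj]
    _ ↔ g⁻¹ * h * g ∈ Subgroup.centralizer {s} := by
      rw [centralizer_singleton_eq_of_mem_centralizer hs hconj hgy]

-- An element normalizing but not centralizing `s` conjugates it to its Galois conjugate `tr s - s`,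
-- so a product of two such elements centralizes `s`.
theorem relIndex_centralizer_normalizer_dvd_two (hs : spectrum F s.val = ∅) :
    (Subgroup.centralizer {s}).relIndex (Subgroup.normalizer (Subgroup.centralizer {s})) ∣ 2 := by
  have conj_eq {b : GL (Fin 2) F} (hb : b ∈ Subgroup.normalizer (Subgroup.centralizer {s}))
      (hbs : b ∉ Subgroup.centralizer {s}) :
      ((b * s * b⁻¹ : GL (Fin 2) F) : Matrix (Fin 2) (Fin 2) F) = s.val.trace • 1 - s.val := by
    have hmem := (Subgroup.mem_normalizer_iff.1 hb s).1
      (Subgroup.mem_centralizer_singleton_iff.2 rfl)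
    refine (eq_or_eq_trace_smul_one_sub hs (mem_centralizer_singleton_iff_commute_coe.1 hmem)
      ?_ ?_).resolve_left fun h ↦ hbs ?_
    · exact trace_units_conj b s.val
    · exact det_units_conj b s.val
    · rw [Subgroup.mem_centralizer_singleton_iff]
      exact mul_inv_eq_iff_eq_mul.1 (Units.ext h)
  rw [Subgroup.relIndex_dvd_two_iff]
  by_cases hle : Subgroup.normalizer (Subgroup.centralizer {s} : Set (GL (Fin 2) F)) ≤
      Subgroup.centralizer {s}
  · exact ⟨1, one_mem _, fun b hb ↦ .inr (hle hb)⟩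
  obtain ⟨a, ha, has⟩ := SetLike.not_le_iff_exists.1 hle
  refine ⟨a, ha, fun b hb ↦ or_iff_not_imp_right.2 fun hbs ↦ ?_⟩
  have hinv : b⁻¹ * s * b⁻¹⁻¹ = a * s * a⁻¹ :=
    Units.ext ((conj_eq (inv_mem hb) (inv_mem_iff.not.2 hbs)).trans (conj_eq ha has).symm)
  rw [Subgroup.mem_centralizer_singleton_iff]
  calc b * a * s
    _ = b * (a * s * a⁻¹) * a := by group
    _ = s * (b * a) := by rw [← hinv]; group

end Torus

section Counting

theorem card_center_generalLinearGroup {n F : Type*} [Fintype n] [DecidableEq n] [Nonempty n]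
    [Field F] [Finite F] : Nat.card (Subgroup.center (GL n F)) = Nat.card F - 1 := by
  rw [GeneralLinearGroup.center_eq_range_scalar, ← Nat.card_units]
  exact Nat.card_range_of_injective (f := GeneralLinearGroup.scalar n (R := F))
    (Units.map_injective fun _ _ ↦ scalar_inj.1)

variable {F : Type*} [Field F] [Finite F]

theorem relIndex_center_of_card_eq {S : Subgroup (GL (Fin 2) F)}
    (hZ : Subgroup.center (GL (Fin 2) F) ≤ S) (hS : Nat.card S = Nat.card F ^ 2 - 1) :
    (Subgroup.center (GL (Fin 2) F)).relIndex S = Nat.card F + 1 := by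
  have hmul := Subgroup.relIndex_mul_relIndex ⊥ _ S bot_le hZ
  rw [Subgroup.relIndex_bot_left, Subgroup.relIndex_bot_left, card_center_generalLinearGroup, hS]
    at hmul
  have hq : 0 < Nat.card F - 1 := Nat.sub_pos_of_lt Finite.one_lt_card
  refine Nat.eq_of_mul_eq_mul_left hq (hmul.trans ?_)
  simpa [mul_comm] using Nat.sq_sub_sq (Nat.card F) 1

theorem eq_top_of_card_eq_of_relIndex_eq {S L : Subgroup (GL (Fin 2) F)} (hSL : S ≤ L)
    (hS : Nat.card S = Nat.card F ^ 2 - 1)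
    (hindex : S.relIndex L = Nat.card F * (Nat.card F - 1)) : L = ⊤ := by
  refine Subgroup.eq_top_of_card_eq L ?_
  have := Fintype.ofFinite F
  have hcard := Subgroup.relIndex_mul_relIndex ⊥ S L bot_le hSL
  rw [Subgroup.relIndex_bot_left, Subgroup.relIndex_bot_left, hS, hindex] at hcard
  rw [← hcard, card_GL_field, Fin.prod_univ_two, ← Nat.card_eq_fintype_card]
  simp [Nat.mul_sub, pow_two]

theorem ncard_span_pair_sdiff_zero_le {V : Type*} [AddCommGroup V] [Module F V] (x y : V) :
    ((Submodule.span F {x, y} : Set V) \ {0}).ncard ≤ Nat.card F ^ 2 - 1 := by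
  classical
  have finrank_le : Module.finrank F (Submodule.span F {x, y}) ≤ 2 := by
    have := finrank_span_finset_le_card (R := F) {x, y}
    rw [Finset.coe_pair] at this
    exact this.trans Finset.card_le_two
  have := FiniteDimensional.span_of_finite F (Set.toFinite {x, y})
  rw [Set.ncard_sdiff_singleton_of_mem (zero_mem _), ← Nat.card_coe_set_eq,
    SetLike.coe_sort_coe, Module.natCard_eq_pow_finrank (K := F)]
  exact Nat.sub_le_sub_right (Nat.pow_le_pow_right Nat.card_pos finrank_le) 1

theorem image_coe_eq_span_sdiff_zero {S : Subgroup (GL (Fin 2) F)}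
    (hS : Nat.card S = Nat.card F ^ 2 - 1) {s : GL (Fin 2) F}
    (hs : s ∉ Subgroup.center (GL (Fin 2) F)) (hSs : S ≤ Subgroup.centralizer {s}) :
    Units.val '' (S : Set (GL (Fin 2) F)) = (Submodule.span F {1, s.val} : Set _) \ {0} := by
  refine Set.eq_of_subset_of_ncard_le ?_ ?_
  · rintro _ ⟨g, hg, rfl⟩
    exact ⟨mem_span_pair_of_commute
      (GeneralLinearGroup.mem_center_iff_val_mem_range_scalar.not.1 hs)
      (mem_centralizer_singleton_iff_commute_coe.1 (hSs hg)), g.ne_zero⟩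
  · rw [Set.ncard_image_of_injective _ Units.val_injective,
      ← Nat.card_coe_set_eq (S : Set (GL (Fin 2) F)), SetLike.coe_sort_coe, hS]
    exact ncard_span_pair_sdiff_zero_le _ _

theorem exists_eq_centralizer_of_card_eq {S : Subgroup (GL (Fin 2) F)} [IsMulCommutative S]
    (hS : Nat.card S = Nat.card F ^ 2 - 1) :
    ∃ s : GL (Fin 2) F, spectrum F s.val = ∅ ∧ S = Subgroup.centralizer {s} := by
  have not_le_center : ¬ S ≤ Subgroup.center (GL (Fin 2) F) := by
    intro h
    have hle := Subgroup.card_le_of_le h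
    have hq : 1 < Nat.card F := Finite.one_lt_card
    rw [hS, card_center_generalLinearGroup] at hle
    have : Nat.card F < Nat.card F ^ 2 := by nlinarith
    lia
  obtain ⟨s, hsS, hs⟩ := SetLike.not_le_iff_exists.1 not_le_center
  have hSs : S ≤ Subgroup.centralizer {s} := fun g hg ↦
    Subgroup.mem_centralizer_singleton_iff.2 (setLike_mul_comm hg hsS)
  have himage := image_coe_eq_span_sdiff_zero hS hs hSs
  rw [GeneralLinearGroup.mem_center_iff_val_mem_range_scalar] at hs
  refine ⟨s, Set.eq_empty_of_forall_notMem fun a ha ↦ ?_, hSs.antisymm fun g hg ↦ ?_⟩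
  · have hne : algebraMap F _ a - s.val ≠ 0 := fun h ↦ hs ⟨a, sub_eq_zero.1 h⟩
    have hspan : algebraMap F _ a - s.val ∈ Submodule.span F {1, s.val} :=
      Submodule.mem_span_pair.2 ⟨a, -1, by simp [Algebra.algebraMap_eq_smul_one, sub_eq_add_neg]⟩
    obtain ⟨g, -, hg⟩ := himage.ge ⟨hspan, hne⟩
    exact spectrum.notMem_iff.2 (hg ▸ g.isUnit) ha
  · obtain ⟨g', hg', hgg'⟩ := himage.ge ⟨mem_span_pair_of_commute hs
      (mem_centralizer_singleton_iff_commute_coe.1 hg), g.ne_zero⟩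
    exact Units.ext hgg' ▸ hg'

end Counting

section Mirabolic

/-- The mirabolic subgroup of `GL₂`: the matrices whose first column is `(1, 0)`, encoded as the
stabilizer of that vector. It is a complement of every nonsplit torus. -/
def mirabolic (F : Type*) [Field F] : Subgroup (GL (Fin 2) F) :=
  MulAction.stabilizer _ (![1, 0] : Fin 2 → F)

variable {F : Type*} [Field F]

theorem mem_mirabolic_iff {g : GL (Fin 2) F} : g ∈ mirabolic F ↔ g 0 0 = 1 ∧ g 1 0 = 0 := by
  change (g : Matrix (Fin 2) (Fin 2) F) *ᵥ ![1, 0] = ![1, 0] ↔ _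
  simp [funext_iff]

theorem inf_ker_det_le_range_upperRightHom {H : Subgroup (GL (Fin 2) F)} (hH : H ≤ mirabolic F) :
    H ⊓ GeneralLinearGroup.det.ker ≤
      (GeneralLinearGroup.upperRightHom (R := F)).toMonoidHom.range := by
  rintro g ⟨hg, hdet⟩
  obtain ⟨h00, h10⟩ := mem_mirabolic_iff.1 (hH hg)
  have h11 : g 1 1 = 1 := by
    have : (g : Matrix (Fin 2) (Fin 2) F).det = 1 := congr(($hdet : F))
    rwa [det_fin_two, h00, h10, one_mul, mul_zero, sub_zero] at this
  refine ⟨.ofAdd (g 0 1), Units.ext ?_⟩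
  ext i j
  fin_cases i <;> fin_cases j <;> simp [h00, h10, h11]

theorem card_inf_ker_det_dvd_card {H : Subgroup (GL (Fin 2) F)} (hH : H ≤ mirabolic F) :
    Nat.card (H ⊓ GeneralLinearGroup.det.ker : Subgroup (GL (Fin 2) F)) ∣ Nat.card F := by
  have card_range := Nat.card_range_of_injective
    (GeneralLinearGroup.injective_upperRightHom (R := F))
  exact (Subgroup.card_dvd_of_le (inf_ker_det_le_range_upperRightHom hH)).trans card_range.dvd

theorem card_map_det_lt_card_inf_ker_det [Finite F] {H : Subgroup (GL (Fin 2) F)}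
    (hH : H ≤ mirabolic F) (hne : H ⊓ GeneralLinearGroup.det.ker ≠ ⊥) :
    Nat.card (H.map GeneralLinearGroup.det) <
      Nat.card (H ⊓ GeneralLinearGroup.det.ker : Subgroup (GL (Fin 2) F)) := by
  refine card_map_lt_card_inf_ker hne fun h hh k hk hk1 hcomm ↦ ?_
  obtain ⟨h00, h10⟩ := mem_mirabolic_iff.1 (hH hh)
  obtain ⟨x, rfl⟩ := inf_ker_det_le_range_upperRightHom hH hk
  have hx : x.toAdd ≠ 0 := fun hx ↦ hk1 (by simp [hx])
  have hentry : x.toAdd + h 0 1 = h 0 1 + x.toAdd * h 1 1 := by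
    simpa [mul_apply, h00] using congr(($hcomm.eq : Matrix (Fin 2) (Fin 2) F) 0 1)
  have h11 : h 1 1 = 1 := mul_left_cancel₀ hx (by linear_combination -hentry)
  refine Units.ext ?_
  simp [det_fin_two, h00, h10, h11]

end Mirabolic

section Arithmetic

theorem le_two_or_eq_mul_sub_one_of_modEq {q u m f : ℕ} (hq : 2 ≤ q) (hu : u ∣ q) (hm0 : 0 < m)
    (hmq : m < q) (hmu : u ≠ 1 → m < u) (hf : f ≤ 2) (hmod : u * m ≡ f [MOD q + 1]) :
    u * m ≤ 2 ∨ u * m = q * (q - 1) := by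
  rcases eq_or_ne u 1 with rfl | hu1
  · rw [one_mul] at hmod ⊢
    exact .inl (hmod.eq_of_lt_of_lt (by lia) (by lia) ▸ hf)
  obtain ⟨v, rfl⟩ := hu
  specialize hmu hu1
  -- Multiply the congruence by `v`, using `v * u ≡ -1`.
  have dvd_add : u * v + 1 ∣ v * f + m := by
    have h : v * f + m ≡ v * (u * m) + m [MOD u * v + 1] := (hmod.mul_left v).symm.add_right m
    exact (h.dvd_iff dvd_rfl).2 ⟨m, by ring⟩
  have hv : 0 < v := Nat.pos_of_ne_zero (by rintro rfl; simp at hq)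
  have le_add : u * v + 1 ≤ v * f + m := Nat.le_of_dvd (by lia) dvd_add
  obtain ⟨a, rfl⟩ : ∃ a, u = a + 2 := Nat.exists_eq_add_of_le' (by lia)
  obtain ⟨b, rfl⟩ : ∃ b, v = b + 1 := Nat.exists_eq_add_of_le' hv
  have hbf : (b + 1) * f ≤ (b + 1) * 2 := Nat.mul_le_mul_left _ hf
  have le_m : a * b + (a + 1) ≤ m := by linarith
  have hm : m = a + 1 := by lia
  have hab : a * b = 0 := by lia
  rcases Nat.mul_eq_zero.1 hab with rfl | rfl
  · exact .inl (by lia)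
  · exact .inr (by simp [hm])

end Arithmetic

section Overgroup

variable {F : Type*} [Field F] {s : GL (Fin 2) F} {L : Subgroup (GL (Fin 2) F)}

theorem relIndex_centralizer_eq_card_mul_card
    (hs : spectrum F s.val = ∅) (hL : Subgroup.centralizer {s} ≤ L) :
    (Subgroup.centralizer {s}).relIndex L =
      Nat.card (L ⊓ mirabolic F ⊓ GeneralLinearGroup.det.ker : Subgroup (GL (Fin 2) F)) *
        Nat.card ((L ⊓ mirabolic F).map GeneralLinearGroup.det) := by
  have hv : (![1, 0] : Fin 2 → F) ≠ 0 := by simp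
  rw [← card_eq_card_inf_ker_mul_card_map]
  exact relIndex_eq_card_inf_stabilizer hL
    (fun _ hg ↦ eq_one_of_mem_centralizer_of_smul_eq hs hg hv) fun g _ ↦
      exists_mem_centralizer_smul_eq hs ((smul_ne_zero_iff_ne g).2 hv) hv

variable [Finite F]

theorem relIndex_centralizer_modEq_relIndex_normalizer_inf
    (hs : spectrum F s.val = ∅) (hL : Subgroup.centralizer {s} ≤ L) :
    (Subgroup.centralizer {s}).relIndex L ≡ (Subgroup.centralizer {s}).relIndex
      (Subgroup.normalizer (Subgroup.centralizer {s}) ⊓ L)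
      [MOD (Subgroup.center (GL (Fin 2) F)).relIndex (Subgroup.centralizer {s})] := by
  have hs_center : s ∉ Subgroup.center (GL (Fin 2) F) := fun h ↦
    notMem_range_scalar_of_spectrum_eq_empty hs
      (GeneralLinearGroup.mem_center_iff_val_mem_range_scalar.1 h)
  have hmod := index_modEq_relIndex_normalizer (H := (Subgroup.centralizer {s}).subgroupOf L)
    (Z := (Subgroup.center (GL (Fin 2) F)).subgroupOf L) fun g hg h hh ↦ by
      rw [← Subgroup.subgroupOf_normalizer_eq hL] at hg
      refine ⟨fun hgh ↦ by_contra fun hZ ↦ hg ?_, fun hZ ↦ ?_⟩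
      · exact mem_normalizer_centralizer_of_conj_mem hs_center hZ hh hgh
      · exact Subgroup.center_le_centralizer _ (Subgroup.instNormalCenter.conj_mem' _ hZ g)
  rw [← Subgroup.subgroupOf_normalizer_eq hL, Subgroup.relIndex_subgroupOf hL] at hmod
  rwa [← Subgroup.inf_subgroupOf_right (Subgroup.normalizer _),
    Subgroup.relIndex_subgroupOf inf_le_right] at hmod

theorem relIndex_centralizer_le_two_or_eq (hs : spectrum F s.val = ∅)
    (hcard : Nat.card (Subgroup.centralizer {s}) = Nat.card F ^ 2 - 1)
    (hL : Subgroup.centralizer {s} ≤ L) :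
    (Subgroup.centralizer {s}).relIndex L ≤ 2 ∨
      (Subgroup.centralizer {s}).relIndex L = Nat.card F * (Nat.card F - 1) := by
  have hmod := relIndex_centralizer_modEq_relIndex_normalizer_inf hs hL
  rw [relIndex_center_of_card_eq (Subgroup.center_le_centralizer _) hcard] at hmod
  have hnormalizer : (Subgroup.centralizer {s}).relIndex
      (Subgroup.normalizer (Subgroup.centralizer {s}) ⊓ L) ≤ 2 := by
    have hdvd := relIndex_centralizer_normalizer_dvd_two hs
    exact le_trans
      (Subgroup.relIndex_le_of_le_right inf_le_left (ne_zero_of_dvd_ne_zero two_ne_zero hdvd))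
      (Nat.le_of_dvd two_pos hdvd)
  have hdet : Nat.card ((L ⊓ mirabolic F).map GeneralLinearGroup.det) < Nat.card F :=
    calc Nat.card ((L ⊓ mirabolic F).map GeneralLinearGroup.det)
      _ ≤ Nat.card Fˣ := Subgroup.card_le_card_group _
      _ < Nat.card F := by
        rw [Nat.card_units]
        exact Nat.sub_one_lt Nat.card_pos.ne'
  rw [relIndex_centralizer_eq_card_mul_card hs hL] at hmod ⊢
  exact le_two_or_eq_mul_sub_one_of_modEq Finite.one_lt_card
    (card_inf_ker_det_dvd_card inf_le_right) Nat.card_pos hdet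
    (fun h ↦ card_map_det_lt_card_inf_ker_det inf_le_right fun hbot ↦ h (by simp [hbot]))
    hnormalizer hmod

end Overgroup

theorem stmt_14_general {F : Type*} [Field F] [Finite F] {L S : Subgroup (GL (Fin 2) F)}
    (hL : L ≠ ⊤) (hSL : S ≤ L) [IsMulCommutative S] (hS : Nat.card S = Nat.card F ^ 2 - 1) :
    (S.subgroupOf L).Normal ∧ (S.subgroupOf L).index ≤ 2 := by
  obtain ⟨s, hs, rfl⟩ := exists_eq_centralizer_of_card_eq hS
  rcases relIndex_centralizer_le_two_or_eq hs hS hSL with hle | heq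
  · exact ⟨normal_of_index_le_two hle, hle⟩
  · exact absurd (eq_top_of_card_eq_of_relIndex_eq hSL hS heq) hL

/-- If `L` is a proper subgroup of `GL_2(F_q)` containing a cyclic subgroup `S`
of order `q^2 - 1`, then `S` is normal in `L` of index at most `2`. -/
theorem stmt_14 (q : ℕ) (hq : IsPrimePow q)
    (F : Type) [Field F] [Fintype F] (hF : Fintype.card F = q)
    (L S : Subgroup (GL (Fin 2) F)) (hL : L ≠ ⊤)
    (hSL : S ≤ L) (hScyc : IsCyclic S) (hScard : Nat.card S = q ^ 2 - 1) :
    (S.subgroupOf L).Normal ∧ (S.subgroupOf L).index ≤ 2 := by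
  have := hScyc.isMulCommutative
  exact stmt_14_general hL hSL (by rw [hScard, Nat.card_eq_fintype_card, hF])
end
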